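/- Let Σ be an I×I real positive definite matrix, fix i ∈ {1,…,I} and Δ ∈ ℝ. Consider the function (δ, Σ̂) ↦ tr(Σ̂⁻¹ Σ) + δᵀ Σ̂⁻¹ δ + log det Σ̂ over pairs where δ ∈ ℝ^I satisfies δ_i = Δ and Σ̂ is an I×I positive definite matrix. This function has a unique global minimizer (δ*, Σ̂*) given by δ*_j = (Σ_{ij} / Σ_{ii}) · Δ for every j, and Σ̂* = Σ + δ* δ*ᵀ; in particular, for all j, j' it holds that Σ̂*_{jj'} − Σ_{jj'} = (Σ_{j'i} Σ_{ji} / Σ_{ii}²) · Δ². -/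

import Mathlib

/-!
With `B = S + δ δᵀ`, the objective equals `tr(Ŝ⁻¹ B) + log det Ŝ`.

* For fixed `δ`, Gibbs' inequality for positive definite matrices
  (`add_log_det_le`, `eq_of_trace_add_log_det_le`) bounds this below by `I + log det B`, with
  equality only at `Ŝ = B`. Writing `A⁻¹ = Pᴴ P`, it reduces to `log x ≤ x - 1` at the eigenvalues
  of `P B Pᴴ`.
* By the matrix determinant lemma `det B = det S * (1 + δᵀ S⁻¹ δ)`. Since `S⁻¹ δ*` is a multiple of
  the `i`-th basis vector, any `δ` with `δ i = δ* i` has `δ - δ*` orthogonal to `δ*` for the form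
  `S⁻¹`, so `δᵀ S⁻¹ δ` is strictly minimized at `δ*`, and so is `det B`.
-/

open Matrix BigOperators

section Gibbs

variable {n : Type*} [Fintype n] [DecidableEq n]

lemma log_det_eq_sum_log {M : Matrix n n ℝ} (hM : M.PosDef) :
    Real.log M.det = ∑ k, Real.log (hM.1.eigenvalues k) := by
  rw [hM.1.det_eq_prod_eigenvalues]
  exact Real.log_prod fun k _ => (hM.eigenvalues_pos k).ne'

lemma trace_eq_sum_eig {M : Matrix n n ℝ} (hM : M.PosDef) :
    M.trace = ∑ k, hM.1.eigenvalues k :=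
  hM.1.trace_eq_sum_eigenvalues

lemma card_add_log_det_le {M : Matrix n n ℝ} (hM : M.PosDef) :
    Fintype.card n + Real.log M.det ≤ M.trace := by
  rw [log_det_eq_sum_log hM, trace_eq_sum_eig hM]
  have := Finset.sum_le_sum fun k (_ : k ∈ Finset.univ) =>
    Real.log_le_sub_one_of_pos (hM.eigenvalues_pos k)
  simp only [Finset.sum_sub_distrib, Finset.sum_const, Finset.card_univ, nsmul_eq_mul,
    mul_one] at this
  linarith

lemma eq_one_of_trace_le {M : Matrix n n ℝ} (hM : M.PosDef)
    (h : M.trace ≤ Fintype.card n + Real.log M.det) : M = 1 := by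
  have h1 : ∀ k, hM.1.eigenvalues k = 1 := by
    by_contra! hne
    obtain ⟨k, hk⟩ := hne
    have := Finset.sum_lt_sum (fun k (_ : k ∈ Finset.univ) =>
      Real.log_le_sub_one_of_pos (hM.eigenvalues_pos k))
      ⟨k, Finset.mem_univ k, Real.log_lt_sub_one_of_pos (hM.eigenvalues_pos k) hk⟩
    rw [log_det_eq_sum_log hM, trace_eq_sum_eig hM] at h
    simp only [Finset.sum_sub_distrib, Finset.sum_const, Finset.card_univ, nsmul_eq_mul,
      mul_one] at this
    linarith
  have h2 : (RCLike.ofReal ∘ hM.1.eigenvalues : n → ℝ) = fun _ => 1 := by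
    ext k; simp [h1]
  rw [hM.1.spectral_theorem, h2, Matrix.diagonal_one, map_one]

/-- Simultaneous normalization: conjugating by a `P` with `A⁻¹ = Pᴴ P` turns `B` into a positive
definite matrix carrying the trace and determinant of `A⁻¹ B`, which is `1` only when `A = B`. -/
lemma exists_normalized {A B : Matrix n n ℝ} (hA : A.PosDef) (hB : B.PosDef) :
    ∃ M : Matrix n n ℝ, M.PosDef ∧ M.trace = (A⁻¹ * B).trace ∧
      Real.log M.det = Real.log B.det - Real.log A.det ∧ (M = 1 → A = B) := by
  obtain ⟨P, hP⟩ : ∃ P : Matrix n n ℝ, A⁻¹ = Pᴴ * P := by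
    open scoped MatrixOrder in
    exact CStarAlgebra.nonneg_iff_eq_star_mul_self.mp hA.inv.posSemidef.nonneg
  have hPu : IsUnit P := by
    have := hA.inv.isUnit
    rw [hP, Matrix.isUnit_iff_isUnit_det, Matrix.det_mul] at this
    exact (Matrix.isUnit_iff_isUnit_det P).mpr (isUnit_of_mul_isUnit_right this)
  have hAA : A * A⁻¹ = 1 :=
    Matrix.mul_nonsing_inv A ((Matrix.isUnit_iff_isUnit_det A).mp hA.isUnit)
  refine ⟨P * B * Pᴴ, hB.mul_mul_conjTranspose_same
    (Matrix.vecMul_injective_of_isUnit hPu), ?_, ?_, ?_⟩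
  · rw [hP, Matrix.trace_mul_comm, Matrix.mul_assoc]
  · have hd : (P * B * Pᴴ).det = B.det * A.det⁻¹ := by
      have : A⁻¹.det = A.det⁻¹ := by rw [Matrix.det_nonsing_inv, Ring.inverse_eq_inv]
      rw [← this, hP]
      simp only [Matrix.det_mul]
      ring
    rw [hd, Real.log_mul hB.det_pos.ne' (inv_ne_zero hA.det_pos.ne'), Real.log_inv]
    ring
  · intro h1
    -- `P * (B * Pᴴ) = 1` commutes to `B * Pᴴ * P = 1`, that is `B * A⁻¹ = 1`.
    rw [Matrix.mul_assoc] at h1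
    have h2 : B * A⁻¹ = 1 := by
      rw [hP, ← Matrix.mul_assoc]; exact mul_eq_one_comm.mp h1
    have h3 : A⁻¹ * A = 1 := mul_eq_one_comm.mp hAA
    calc A = (B * A⁻¹) * A := by rw [h2, Matrix.one_mul]
      _ = B := by rw [Matrix.mul_assoc, h3, Matrix.mul_one]

/-- Gibbs' inequality for centred Gaussians with covariances `A` and `B`. -/
lemma add_log_det_le {A B : Matrix n n ℝ} (hA : A.PosDef) (hB : B.PosDef) :
    Fintype.card n + Real.log B.det ≤ (A⁻¹ * B).trace + Real.log A.det := by
  obtain ⟨M, hM, ht, hd, -⟩ := exists_normalized hA hB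
  have := card_add_log_det_le hM
  linarith

/-- The equality case of Gibbs' inequality. -/
lemma eq_of_trace_add_log_det_le {A B : Matrix n n ℝ} (hA : A.PosDef) (hB : B.PosDef)
    (h : (A⁻¹ * B).trace + Real.log A.det ≤ Fintype.card n + Real.log B.det) : A = B := by
  obtain ⟨M, hM, ht, hd, h1⟩ := exists_normalized hA hB
  exact h1 (eq_one_of_trace_le hM (by linarith))

lemma trace_mul_add_vecMulVec (A S : Matrix n n ℝ) (v : n → ℝ) :
    (A * (S + Matrix.vecMulVec v v)).trace = (A * S).trace + v ⬝ᵥ (A *ᵥ v) := by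
  rw [Matrix.mul_add, Matrix.trace_add, Matrix.mul_vecMulVec, Matrix.trace_vecMulVec,
    dotProduct_comm]

lemma posDef_add_vecMulVec {S : Matrix n n ℝ} (hS : S.PosDef) (v : n → ℝ) :
    (S + Matrix.vecMulVec v v).PosDef := by
  have := Matrix.posSemidef_vecMulVec_self_star v
  rw [star_trivial] at this
  exact hS.add_posSemidef this

lemma det_add_vecMulVec_self {S : Matrix n n ℝ} (hS : S.PosDef) (v : n → ℝ) :
    (S + Matrix.vecMulVec v v).det = S.det * (1 + v ⬝ᵥ (S⁻¹ *ᵥ v)) := by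
  rw [Matrix.vecMulVec_eq Unit, Matrix.det_add_replicateCol_mul_replicateRow
    ((Matrix.isUnit_iff_isUnit_det S).mp hS.isUnit)]
  congr 2
  rw [Matrix.det_unique]
  simp [Matrix.mul_assoc, Matrix.mul_apply, dotProduct, Matrix.mulVec]

end Gibbs

/-- Among vectors with a prescribed `i`-th coordinate, the form `S⁻¹` is strictly minimized at the
multiple `w` of the `i`-th row of `S` having that coordinate. -/
lemma quadForm_lt {n : Type*} [Fintype n] [DecidableEq n] {S : Matrix n n ℝ} (hS : S.PosDef)
    (i : n) (c : ℝ) {v w : n → ℝ} (hw : ∀ j, w j = S i j * c) (hi : v i = w i) (hne : v ≠ w) :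
    w ⬝ᵥ (S⁻¹ *ᵥ w) < v ⬝ᵥ (S⁻¹ *ᵥ v) := by
  have hsym : ∀ a b, S a b = S b a := fun a b => by
    simpa using (hS.1.apply b a)
  have hw' : w = S *ᵥ Pi.single i c := by
    ext j
    rw [hw j, hsym i j]
    simp
  have hSw : S⁻¹ *ᵥ w = Pi.single i c := by
    rw [hw', Matrix.mulVec_mulVec,
      Matrix.nonsing_inv_mul S ((Matrix.isUnit_iff_isUnit_det S).mp hS.isUnit),
      Matrix.one_mulVec]
  obtain ⟨e, rfl⟩ : ∃ e, v = w + e := ⟨v - w, by simp⟩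
  have hei : e i = 0 := by simpa using hi
  have he : e ≠ 0 := by rintro rfl; simp at hne
  have hpos := hS.inv.dotProduct_mulVec_pos he
  rw [star_trivial] at hpos
  have h1 : e ⬝ᵥ (S⁻¹ *ᵥ w) = 0 := by rw [hSw]; simp [hei]
  have h2 : w ⬝ᵥ (S⁻¹ *ᵥ e) = 0 := by
    have hT : (S⁻¹)ᵀ = S⁻¹ := by simpa using hS.inv.1.eq
    rw [Matrix.dotProduct_mulVec, ← Matrix.mulVec_transpose, hT, dotProduct_comm, h1]
  rw [Matrix.mulVec_add, dotProduct_add, add_dotProduct, add_dotProduct, h1, h2]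
  linarith

/-- Proposition 2, Correlated Errors and Biases: for a positive definite
`Σ` (`I × I`), the function `(δ, Σ̂) ↦ tr(Σ̂⁻¹ Σ) + δᵀ Σ̂⁻¹ δ + log det Σ̂` over pairs with
`δ_i = Δ` and `Σ̂` positive definite has the unique global minimizer `(δ*, Σ̂*)` with
`δ*_j = (Σ_{ij}/Σ_{ii})·Δ` and `Σ̂* = Σ + δ* δ*ᵀ`; in particular
`Σ̂*_{jj'} − Σ_{jj'} = (Σ_{j'i} Σ_{ji} / Σ_{ii}²)·Δ²`. -/
theorem stmt14 (I : ℕ) (S : Matrix (Fin I) (Fin I) ℝ) (hS : S.PosDef)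
    (i : Fin I) (Δ : ℝ) :
    let f : (Fin I → ℝ) → Matrix (Fin I) (Fin I) ℝ → ℝ :=
      fun δ Shat => (Shat⁻¹ * S).trace + δ ⬝ᵥ (Shat⁻¹ *ᵥ δ) + Real.log Shat.det
    let δstar : Fin I → ℝ := fun j => (S i j / S i i) * Δ
    let Sstar : Matrix (Fin I) (Fin I) ℝ := S + Matrix.vecMulVec δstar δstar
    δstar i = Δ ∧ Sstar.PosDef ∧
    (∀ (δ : Fin I → ℝ) (Shat : Matrix (Fin I) (Fin I) ℝ),
      δ i = Δ → Shat.PosDef → (δ, Shat) ≠ (δstar, Sstar) → f δstar Sstar < f δ Shat) ∧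
    (∀ j j' : Fin I, Sstar j j' - S j j' = (S j' i * S j i / (S i i) ^ 2) * Δ ^ 2) := by
  intro f δstar Sstar
  have hii : 0 < S i i := hS.diag_pos
  have hi : δstar i = Δ := by simp [δstar, hii.ne']
  have hstar : Sstar.PosDef := posDef_add_vecMulVec hS δstar
  have hf : ∀ δ A, f δ A = (A⁻¹ * (S + Matrix.vecMulVec δ δ)).trace + Real.log A.det := by
    intro δ A
    simp only [f]
    rw [trace_mul_add_vecMulVec]
  have hfstar : f δstar Sstar = Fintype.card (Fin I) + Real.log Sstar.det := by
    rw [hf]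
    change (Sstar⁻¹ * Sstar).trace + _ = _
    rw [Matrix.nonsing_inv_mul Sstar ((Matrix.isUnit_iff_isUnit_det Sstar).mp hstar.isUnit),
      Matrix.trace_one]
  refine ⟨hi, hstar, ?_, ?_⟩
  · intro δ A hδ hA hne
    rw [hfstar, hf]
    by_cases hδs : δ = δstar
    · subst hδs
      by_contra! hle
      exact hne (Prod.ext rfl (eq_of_trace_add_log_det_le hA hstar hle))
    · have hq := quadForm_lt hS i (Δ / S i i) (v := δ) (w := δstar)
        (fun j => by simp only [δstar]; ring) (hδ.trans hi.symm) hδs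
      have hdet : Sstar.det < (S + Matrix.vecMulVec δ δ).det := by
        simp only [Sstar]
        rw [det_add_vecMulVec_self hS, det_add_vecMulVec_self hS]
        exact mul_lt_mul_of_pos_left (by linarith) hS.det_pos
      have hlog := Real.log_lt_log hstar.det_pos hdet
      have := add_log_det_le hA (posDef_add_vecMulVec hS δ)
      linarith
  · intro j j'
    have hsym : ∀ a b, S a b = S b a := fun a b => by
      simpa using (hS.1.apply b a)
    simp only [Sstar, δstar, Matrix.add_apply, Matrix.vecMulVec_apply]
    rw [hsym j' i, hsym j i]
    field_simp
    ring
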